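/- Let g(x) = log₂(1 + x/2) and let ⟨⟨·⟩⟩ be a norm on c₀₀ satisfying the implicit equation ⟨⟨x⟩⟩ = max(‖x‖_{ℓ∞}, sup{ (1/g(ℓ)) Σ_{i=1}^ℓ ⟨⟨E_i(x)⟩⟩ : ℓ ≥ 3, E₁ < E₂ < ⋯ < E_ℓ finite subsets of ℕ }) for all x ∈ c₀₀. Then ⟨⟨·⟩⟩ is equivalent to ‖·‖: ‖x‖ ≤ ⟨⟨x⟩⟩ for all x ∈ c₀₀, and there is a constant C ≥ 1 such that ⟨⟨x⟩⟩ ≤ C ‖x‖ for all x ∈ c₀₀. -/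

import Mathlib

abbrev c00 : Type := ℕ →₀ ℝ

noncomputable def flog (x : ℝ) : ℝ := Real.logb 2 (x + 1)

noncomputable def supNorm (x : c00) : ℝ := ⨆ i, |x i|

def proj (E : Finset ℕ) (x : c00) : c00 := x.filter (· ∈ E)

def FLt (A B : Finset ℕ) : Prop := ∀ a ∈ A, ∀ b ∈ B, a < b

def IsNormC00 (N : c00 → ℝ) : Prop :=
  (∀ x, N x = 0 ↔ x = 0) ∧ (∀ x y, N (x + y) ≤ N x + N y) ∧
    ∀ (a : ℝ) (x : c00), N (a • x) = |a| * N x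

def schSet (N : c00 → ℝ) (x : c00) : Set ℝ :=
  {s | ∃ n : ℕ, 2 ≤ n ∧ ∃ E : Fin n → Finset ℕ,
    (∀ i j : Fin n, i < j → FLt (E i) (E j)) ∧
    s = (flog n)⁻¹ * ∑ i, N (proj (E i) x)}

def IsSchlumprechtNorm (N : c00 → ℝ) : Prop :=
  IsNormC00 N ∧ ∀ x : c00, IsLUB (insert (supNorm x) (schSet N x)) (N x)

def IsBlockSeq (x : ℕ → c00) : Prop :=
  (∀ n, x n ≠ 0) ∧ ∀ n, ∀ i ∈ (x n).support, ∀ j ∈ (x (n+1)).support, i < j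

def SeqEquiv (N : c00 → ℝ) (u v : ℕ → c00) : Prop :=
  ∃ c : ℝ, 1 ≤ c ∧ ∀ a : ℕ →₀ ℝ,
    (1 / c) * N (a.sum fun i t => t • u i) ≤ N (a.sum fun i t => t • v i) ∧
    N (a.sum fun i t => t • v i) ≤ c * N (a.sum fun i t => t • u i)

noncomputable def glog (x : ℝ) : ℝ := Real.logb 2 (1 + x / 2)

def gSet (Nb : c00 → ℝ) (x : c00) : Set ℝ :=
  {s | ∃ l : ℕ, 3 ≤ l ∧ ∃ E : Fin l → Finset ℕ,
    (∀ i j : Fin l, i < j → FLt (E i) (E j)) ∧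
    s = (glog l)⁻¹ * ∑ i, Nb (proj (E i) x)}

/-- `Nb` is a norm on `c₀₀` satisfying the implicit equation
`⟨⟨x⟩⟩ = max(‖x‖_{ℓ∞}, sup{(1/g(ℓ)) ∑ᵢ ⟨⟨Eᵢ(x)⟩⟩ : ℓ ≥ 3, E₁ < ⋯ < E_ℓ})`. -/
def IsGNorm (Nb : c00 → ℝ) : Prop :=
  IsNormC00 Nb ∧ ∀ x : c00, IsLUB (insert (supNorm x) (gSet Nb x)) (Nb x)

/-!
Both norms attain the supremum in their implicit equations, so a value that is not a supremum norm
splits as `φ(n)⁻¹ ∑ᵢ N(Eᵢ(x))` over successive sets strictly smaller than the support.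

Since `g(n + 1) ≤ f(n)` and the empty set may be added to any family, `⟨⟨·⟩⟩` satisfies the
inequalities `∑ᵢ ⟨⟨Eᵢ(x)⟩⟩ ≤ f(n) ⟨⟨x⟩⟩` defining `‖·‖`, and `‖x‖ ≤ ⟨⟨x⟩⟩` follows by induction on
the support.

For the converse, start from a splitting of `⟨⟨x⟩⟩` of weight `b = g(n)` and iterate until the next
weight exceeds `4b`. This writes `b ⟨⟨x⟩⟩` as `∑ w ⟨⟨E(x)⟩⟩` over successive leaves `E`. Because
`n ≤ 2 ^ (g(n) + 1)`, the products `w` of the weights obey a Kraft-type inequality, which leaves at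
most `2 ^ (b + O(1 + √(b / t)))` leaves with `w ≥ t`. The logarithmic estimate
`∑ᵢ ‖Eᵢ(x)‖ ≤ f(n) ‖x‖` for these level sets, integrated over `t`, gives
`∑ w ‖E(x)‖ ≤ (b + O(√b)) ‖x‖`. One round thus costs a factor `1 + O(1 / √b)`, and since `b` at
least quadruples from one round to the next, the accumulated factor stays bounded.
-/

section Projections

variable {E F : Finset ℕ} {x : c00}

lemma proj_apply (E : Finset ℕ) (x : c00) (i : ℕ) : proj E x i = if i ∈ E then x i else 0 :=
  Finsupp.filter_apply _ _ _

lemma proj_proj (E F : Finset ℕ) (x : c00) : proj E (proj F x) = proj (E ∩ F) x := by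
  ext i
  simp only [proj_apply, Finset.mem_inter, ite_and]

lemma proj_empty (x : c00) : proj ∅ x = 0 := by
  ext i
  simp [proj_apply]

lemma proj_support (x : c00) : proj x.support x = x :=
  (Finsupp.filter_eq_self_iff _ _).2 fun _ hi => Finsupp.mem_support_iff.2 hi

lemma proj_proj_of_subset (h : E ⊆ F) : proj E (proj F x) = proj E x := by
  rw [proj_proj, Finset.inter_eq_left.2 h]

lemma bddAbove_range_abs (x : c00) : BddAbove (Set.range fun i => |x i|) := by
  have hfin : (abs '' Set.range x).Finite := x.finite_range.image _
  rw [← Set.range_comp] at hfin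
  exact hfin.bddAbove

lemma supNorm_nonneg (x : c00) : 0 ≤ supNorm x :=
  Real.iSup_nonneg fun _ => abs_nonneg _

lemma supNorm_proj_le (E : Finset ℕ) (x : c00) : supNorm (proj E x) ≤ supNorm x := by
  refine ciSup_mono (bddAbove_range_abs x) fun i => ?_
  rw [proj_apply]
  split_ifs <;> simp

end Projections

section Blocks

variable {A B A' B' F : Finset ℕ} {L : List (Finset ℕ)} {N : c00 → ℝ} {x : c00}

lemma FLt.mono (h : FLt A B) (hA : A' ⊆ A) (hB : B' ⊆ B) : FLt A' B' :=
  fun a ha b hb => h a (hA ha) b (hB hb)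

lemma FLt.disjoint (h : FLt A B) : Disjoint A B :=
  Finset.disjoint_left.2 fun a ha hb => lt_irrefl a (h a ha a hb)

lemma pairwise_FLt_map_inter (hL : L.Pairwise FLt) (F : Finset ℕ) :
    (L.map (· ∩ F)).Pairwise FLt :=
  hL.map _ fun _ _ h => h.mono Finset.inter_subset_left Finset.inter_subset_left

/-- The sum `∑ᵢ N(Eᵢ(x))` over a list `E₁, …, Eₙ` of sets. A family `E₁ < ⋯ < Eₙ` is encoded as a
list with `List.Pairwise FLt`; empty members are allowed. -/
def blockSum (N : c00 → ℝ) (x : c00) (L : List (Finset ℕ)) : ℝ :=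
  (L.map fun E => N (proj E x)).sum

lemma blockSum_cons (N : c00 → ℝ) (x : c00) (E : Finset ℕ) (L : List (Finset ℕ)) :
    blockSum N x (E :: L) = N (proj E x) + blockSum N x L := by
  simp [blockSum]

lemma blockSum_proj (N : c00 → ℝ) (x : c00) (F : Finset ℕ) (L : List (Finset ℕ)) :
    blockSum N (proj F x) L = blockSum N x (L.map (· ∩ F)) := by
  simp [blockSum, proj_proj, Function.comp_def]

lemma blockSum_le_blockSum {M : c00 → ℝ} (h : ∀ E ∈ L, N (proj E x) ≤ M (proj E x)) :
    blockSum N x L ≤ blockSum M x L :=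
  List.sum_le_sum h

lemma blockSum_eq_zero (hN : N 0 = 0) (h : ∀ E ∈ L, Disjoint E F) :
    blockSum N (proj F x) L = 0 := by
  refine List.sum_eq_zero fun s hs => ?_
  obtain ⟨E, hE, rfl⟩ := List.mem_map.1 hs
  rw [proj_proj, Finset.disjoint_iff_inter_eq_empty.1 (h E hE), proj_empty, hN]

lemma blockSum_proj_of_subset_mem (hN : N 0 = 0) (hL : L.Pairwise FLt) (hA : A ∈ L)
    (hF : F ⊆ A) : blockSum N (proj F x) L = N (proj F x) := by
  induction L with
  | nil => simp at hA
  | cons E L ih =>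
    rw [List.pairwise_cons] at hL
    rw [blockSum_cons]
    rcases List.mem_cons.1 hA with rfl | hAL
    · rw [proj_proj, Finset.inter_eq_right.2 hF, blockSum_eq_zero hN, add_zero]
      exact fun B hB => (hL.1 B hB).disjoint.symm.mono_right hF
    · have hEF : Disjoint E F := (hL.1 A hAL).disjoint.mono_right hF
      rw [ih hL.2 hAL, proj_proj, Finset.disjoint_iff_inter_eq_empty.1 hEF, proj_empty, hN,
        zero_add]

lemma blockSum_eq_sum_toFinset (hN : N 0 = 0) (hL : L.Pairwise FLt) :
    blockSum N x L = ∑ E ∈ L.toFinset, N (proj E x) := by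
  induction L with
  | nil => simp [blockSum]
  | cons E L ih =>
    rw [List.pairwise_cons] at hL
    rw [blockSum_cons, ih hL.2, List.toFinset_cons]
    by_cases hE : E ∈ L
    · have hE₀ : E = ∅ := disjoint_self.1 (hL.1 E hE).disjoint
      rw [Finset.insert_eq_of_mem (List.mem_toFinset.2 hE), hE₀, proj_empty, hN, zero_add]
    · rw [Finset.sum_insert (mt List.mem_toFinset.1 hE)]

lemma finite_blockSums (hN : N 0 = 0) (x : c00) :
    {s | ∃ L : List (Finset ℕ), L.Pairwise FLt ∧ blockSum N x L = s}.Finite := by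
  refine (Finset.finite_toSet (x.support.powerset.powerset.image
    fun 𝓕 => ∑ E ∈ 𝓕, N (proj E x))).subset ?_
  rintro _ ⟨L, hL, rfl⟩
  refine Finset.mem_coe.2 (Finset.mem_image.2 ⟨(L.map (· ∩ x.support)).toFinset, ?_, ?_⟩)
  · refine Finset.mem_powerset.2 fun E hE => ?_
    obtain ⟨A, -, rfl⟩ := List.mem_map.1 (List.mem_toFinset.1 hE)
    exact Finset.mem_powerset.2 Finset.inter_subset_right
  · rw [← blockSum_eq_sum_toFinset hN (pairwise_FLt_map_inter hL _), ← blockSum_proj,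
      proj_support]

/-- The inequality `∑ᵢ N(Eᵢ(x)) ≤ φ(n) N(x)` for all families `E₁ < ⋯ < Eₙ` with `n ≥ m`, known as
a lower `φ`-estimate. -/
def LowerEstimate (φ : ℕ → ℝ) (m : ℕ) (N : c00 → ℝ) : Prop :=
  ∀ (x : c00) (L : List (Finset ℕ)), m ≤ L.length → L.Pairwise FLt →
    blockSum N x L ≤ φ L.length * N x

end Blocks

/-- The implicit equation `N(x) = max(‖x‖_{ℓ∞}, sup {φ(n)⁻¹ ∑ᵢ N(Eᵢ(x)) : n ≥ m, E₁ < ⋯ < Eₙ})`,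
which specializes to both `IsSchlumprechtNorm` and `IsGNorm`. Of the norm axioms only `N 0 = 0` is
recorded. -/
structure IsImplicitSolution (φ : ℕ → ℝ) (m : ℕ) (N : c00 → ℝ) : Prop where
  map_zero : N 0 = 0
  isLUB (x : c00) : IsLUB (insert (supNorm x)
    {s | ∃ L : List (Finset ℕ), m ≤ L.length ∧ L.Pairwise FLt ∧
      s = (φ L.length)⁻¹ * blockSum N x L}) (N x)

/-- A family `S` of at least `m` successive proper subsets of `F` at which `N(F(x))` is attained
in the implicit equation with weight `φ`. -/
structure IsNormingSplit (φ : ℕ → ℝ) (m : ℕ) (N : c00 → ℝ) (x : c00) (F : Finset ℕ)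
    (S : List (Finset ℕ)) : Prop where
  le_length : m ≤ S.length
  pairwise : S.Pairwise FLt
  ssubset : ∀ E ∈ S, E ⊂ F
  eq_inv_mul : N (proj F x) = (φ S.length)⁻¹ * blockSum N x S

namespace IsImplicitSolution

variable {φ : ℕ → ℝ} {m : ℕ} {N : c00 → ℝ}

lemma supNorm_le (hN : IsImplicitSolution φ m N) (x : c00) : supNorm x ≤ N x :=
  (hN.isLUB x).1 (Set.mem_insert _ _)

lemma nonneg (hN : IsImplicitSolution φ m N) (x : c00) : 0 ≤ N x :=
  (supNorm_nonneg x).trans (hN.supNorm_le x)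

lemma lowerEstimate (hN : IsImplicitSolution φ m N) (hφ : ∀ n, m ≤ n → 0 < φ n) :
    LowerEstimate φ m N := fun x L hm hL =>
  (inv_mul_le_iff₀ (hφ _ hm)).1 ((hN.isLUB x).1 (Set.mem_insert_of_mem _ ⟨L, hm, hL, rfl⟩))

lemma proj_le (hN : IsImplicitSolution φ m N) (F : Finset ℕ) (x : c00) :
    N (proj F x) ≤ N x := by
  refine (hN.isLUB (proj F x)).2 ?_
  rintro s (rfl | ⟨L, hm, hL, rfl⟩)
  · exact (supNorm_proj_le F x).trans (hN.supNorm_le x)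
  · refine (hN.isLUB x).1 (Set.mem_insert_of_mem _ ⟨L.map (· ∩ F), by simpa using hm,
      pairwise_FLt_map_inter hL F, ?_⟩)
    rw [blockSum_proj, List.length_map]

lemma lowerEstimate_zero (hN : IsImplicitSolution φ 2 N) (hφ : ∀ n, 2 ≤ n → 0 < φ n)
    (h0 : 0 ≤ φ 0) (h1 : 1 ≤ φ 1) : LowerEstimate φ 0 N
  | x, [], _, _ => by simpa [blockSum] using mul_nonneg h0 (hN.nonneg x)
  | x, [F], _, _ => by
    simpa [blockSum] using (hN.proj_le F x).trans (le_mul_of_one_le_left (hN.nonneg x) h1)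
  | x, E :: F :: L, _, hL => hN.lowerEstimate hφ x _ (by simp) hL

/-- Members of the defining set that exceed `N x / 2` come from families of bounded length, and
there are finitely many block sums, so the supremum is attained. -/
lemma eq_supNorm_or_exists_eq (hN : IsImplicitSolution φ m N)
    (hφ : Filter.Tendsto φ Filter.atTop Filter.atTop) (x : c00) :
    N x = supNorm x ∨ ∃ L : List (Finset ℕ), m ≤ L.length ∧ L.Pairwise FLt ∧
      N x = (φ L.length)⁻¹ * blockSum N x L := by
  rcases (hN.nonneg x).eq_or_lt with h₀ | hpos
  · exact Or.inl (le_antisymm (h₀ ▸ supNorm_nonneg x) (hN.supNorm_le x))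
  have hsums := finite_blockSums hN.map_zero x
  obtain ⟨T, hT⟩ := hsums.bddAbove
  obtain ⟨n₀, hn₀⟩ := Filter.eventually_atTop.1 (hφ.eventually_gt_atTop (max 0 (2 * T / N x)))
  obtain ⟨b, hbA, hb, -⟩ := (hN.isLUB x).exists_between (half_lt_self hpos)
  refine ((hN.isLUB x).inter_Ici_of_mem hbA).mem_of_isClosed ⟨b, hbA, Set.self_mem_Ici⟩
    (Set.Finite.isClosed ?_) |>.1
  refine (((Set.finite_Iio n₀).image2 (fun n s => (φ n)⁻¹ * s) hsums).insert
    (supNorm x)).subset ?_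
  rintro s ⟨rfl | ⟨L, -, hL, rfl⟩, hs⟩
  · exact Set.mem_insert _ _
  refine Set.mem_insert_of_mem _ ⟨L.length, ?_, _, ⟨L, hL, rfl⟩, rfl⟩
  by_contra hlen
  have hφL := hn₀ L.length (not_lt.1 hlen)
  have hφ₀ : 0 < φ L.length := (le_max_left _ _).trans_lt hφL
  have hlow : φ L.length * (N x / 2) < blockSum N x L :=
    (lt_inv_mul_iff₀ hφ₀).1 (hb.trans_le hs)
  have hhigh : 2 * T < φ L.length * N x :=
    (div_lt_iff₀ hpos).1 ((le_max_right _ _).trans_lt hφL)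
  linarith [hT ⟨L, hL, rfl⟩]

lemma eq_supNorm_or_exists_isNormingSplit (hN : IsImplicitSolution φ m N)
    (hφ : Filter.Tendsto φ Filter.atTop Filter.atTop) (hφ₁ : ∀ n, m ≤ n → 1 < φ n)
    (x : c00) (F : Finset ℕ) :
    N (proj F x) = supNorm (proj F x) ∨ ∃ S, IsNormingSplit φ m N x F S := by
  rcases hN.eq_supNorm_or_exists_eq hφ (proj F x) with h | ⟨L, hm, hL, hLsum⟩
  · exact Or.inl h
  by_cases hF : ∃ E ∈ L, F ⊆ E
  · obtain ⟨E, hE, hFE⟩ := hF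
    have hφL := hφ₁ _ hm
    rw [blockSum_proj_of_subset_mem hN.map_zero hL hE hFE,
      eq_inv_mul_iff_mul_eq₀ (by linarith)] at hLsum
    have hzero : N (proj F x) = 0 := by
      nlinarith [hN.nonneg (proj F x)]
    exact Or.inl (le_antisymm (hzero ▸ supNorm_nonneg _) (hN.supNorm_le _))
  · push Not at hF
    refine Or.inr ⟨L.map (· ∩ F), by simpa using hm, pairwise_FLt_map_inter hL F, ?_, ?_⟩
    · intro A hA
      obtain ⟨E, hE, rfl⟩ := List.mem_map.1 hA
      exact Finset.inter_subset_right.ssubset_of_ne fun h => hF E hE (Finset.inter_eq_right.1 h)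
    · rw [hLsum, blockSum_proj, List.length_map]

theorem le_of_lowerEstimate {M : c00 → ℝ} (hN : IsImplicitSolution φ m N)
    (hφ : Filter.Tendsto φ Filter.atTop Filter.atTop) (hφ₁ : ∀ n, m ≤ n → 1 < φ n)
    (hsup : ∀ x, supNorm x ≤ M x) (hM : LowerEstimate φ m M) (x : c00) : N x ≤ M x := by
  suffices h : ∀ F, N (proj F x) ≤ M (proj F x) by
    simpa only [proj_support] using h x.support
  intro F
  induction F using Finset.strongInduction with
  | H F ih =>
    rcases hN.eq_supNorm_or_exists_isNormingSplit hφ hφ₁ x F with h | ⟨S, hS⟩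
    · exact h.trans_le (hsup _)
    have hφS : 0 < φ S.length := by linarith [hφ₁ _ hS.le_length]
    rw [hS.eq_inv_mul, inv_mul_le_iff₀ hφS]
    calc blockSum N x S ≤ blockSum M x S :=
          blockSum_le_blockSum fun E hE => ih E (hS.ssubset E hE)
      _ = blockSum M (proj F x) S := by
          refine congrArg List.sum (List.map_congr_left fun E hE => ?_)
          rw [proj_proj_of_subset (hS.ssubset E hE).subset]
      _ ≤ φ S.length * M (proj F x) := hM _ S hS.le_length hS.pairwise

end IsImplicitSolution

section WeightedFamilies

variable {F : Finset ℕ} {S : List (Finset ℕ)} {L : List (ℝ × Finset ℕ)} {N M : c00 → ℝ} {x : c00}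

/-- A list of pairs `(w, E)` of a weight `0 < w ≤ 1` and a subset `E` of `F`, the sets being
successive. Such families record the leaves below `F` in an iteration of the implicit equation,
`w` being the product of the factors `1 / φ` on the way to the leaf. -/
structure IsWeightedFamily (F : Finset ℕ) (L : List (ℝ × Finset ℕ)) : Prop where
  pos : ∀ p ∈ L, 0 < p.1
  le_one : ∀ p ∈ L, p.1 ≤ 1
  subset : ∀ p ∈ L, p.2 ⊆ F
  pairwise : L.Pairwise fun p q => FLt p.2 q.2

/-- The weighted version `∑ w N(E(x))` of `blockSum`, over the pairs `(w, E)` of `L`. -/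
def weightedSum (N : c00 → ℝ) (x : c00) (L : List (ℝ × Finset ℕ)) : ℝ :=
  (L.map fun p => p.1 * N (proj p.2 x)).sum

/-- The sum `∑ 2 ^ (-D / √w)` over the weights of a family, named after Kraft's inequality: a bound
for it limits how many weights can exceed a given level. -/
noncomputable def kraftSum (D : ℝ) (L : List (ℝ × Finset ℕ)) : ℝ :=
  (L.map fun p => (2 : ℝ) ^ (-(D / √p.1))).sum

/-- The family with all weights divided by `b`. -/
noncomputable def divWeights (b : ℝ) (L : List (ℝ × Finset ℕ)) : List (ℝ × Finset ℕ) :=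
  L.map fun p => (p.1 / b, p.2)

lemma isWeightedFamily_singleton (F : Finset ℕ) : IsWeightedFamily F [(1, F)] where
  pos := by simp
  le_one := by simp
  subset := by simp
  pairwise := List.pairwise_singleton _ _

lemma IsWeightedFamily.flatMap {G : Finset ℕ → List (ℝ × Finset ℕ)} (hS : S.Pairwise FLt)
    (hSF : ∀ E ∈ S, E ⊆ F) (hG : ∀ E ∈ S, IsWeightedFamily E (G E)) :
    IsWeightedFamily F (S.flatMap G) where
  pos p hp := by
    obtain ⟨E, hE, hpE⟩ := List.mem_flatMap.1 hp
    exact (hG E hE).pos p hpE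
  le_one p hp := by
    obtain ⟨E, hE, hpE⟩ := List.mem_flatMap.1 hp
    exact (hG E hE).le_one p hpE
  subset p hp := by
    obtain ⟨E, hE, hpE⟩ := List.mem_flatMap.1 hp
    exact ((hG E hE).subset p hpE).trans (hSF E hE)
  pairwise := List.pairwise_flatMap.2 ⟨fun E hE => (hG E hE).pairwise,
    hS.imp_of_mem fun hA hB h p hp q hq => h.mono ((hG _ hA).subset p hp) ((hG _ hB).subset q hq)⟩

lemma IsWeightedFamily.divWeights {b : ℝ} (hL : IsWeightedFamily F L) (hb : 1 ≤ b) :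
    IsWeightedFamily F (divWeights b L) where
  pos := List.forall_mem_map.2 fun p hp => div_pos (hL.pos p hp) (by linarith)
  le_one := List.forall_mem_map.2 fun p hp =>
    div_le_one_of_le₀ ((hL.le_one p hp).trans hb) (by linarith)
  subset := List.forall_mem_map.2 hL.subset
  pairwise := List.pairwise_map.2 hL.pairwise

lemma sum_map_flatMap {α β : Type*} (f : β → ℝ) (S : List α) (G : α → List β) :
    ((S.flatMap G).map f).sum = (S.map fun a => ((G a).map f).sum).sum := by
  rw [List.map_flatMap, List.flatMap_def, List.sum_flatten, List.map_map]
  rfl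

lemma weightedSum_divWeights (N : c00 → ℝ) (x : c00) (b : ℝ) (L : List (ℝ × Finset ℕ)) :
    weightedSum N x (divWeights b L) = b⁻¹ * weightedSum N x L := by
  rw [weightedSum, weightedSum, ← List.sum_map_mul_left, divWeights, List.map_map]
  refine congrArg List.sum (List.map_congr_left fun p _ => ?_)
  simp only [Function.comp_apply]
  ring

lemma weightedSum_proj (hL : IsWeightedFamily F L) :
    weightedSum N (proj F x) L = weightedSum N x L :=
  congrArg List.sum (List.map_congr_left fun p hp => by
    rw [proj_proj_of_subset (hL.subset p hp)])

lemma weightedSum_le_mul_weightedSum {a : ℝ} (hL : IsWeightedFamily F L)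
    (h : ∀ p ∈ L, N (proj p.2 x) ≤ a * M (proj p.2 x)) :
    weightedSum N x L ≤ a * weightedSum M x L := by
  rw [weightedSum, weightedSum, ← List.sum_map_mul_left]
  refine List.sum_le_sum fun p hp => ?_
  calc p.1 * N (proj p.2 x) ≤ p.1 * (a * M (proj p.2 x)) :=
        mul_le_mul_of_nonneg_left (h p hp) (hL.pos p hp).le
    _ = a * (p.1 * M (proj p.2 x)) := by ring

lemma kraftSum_singleton_le_one {D : ℝ} (hD : 0 ≤ D) (F : Finset ℕ) :
    kraftSum D [(1, F)] ≤ 1 := by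
  simpa [kraftSum] using Real.rpow_le_one_of_one_le_of_nonpos one_le_two (neg_nonpos.2 hD)

lemma kraftSum_divWeights_le {D b a : ℝ} (hL : IsWeightedFamily F L) (hb : 1 ≤ b) (hD : 0 ≤ D)
    (ha : a ≤ D * (√b - 1)) : kraftSum D (divWeights b L) ≤ 2 ^ (-a) * kraftSum D L := by
  rw [kraftSum, kraftSum, ← List.sum_map_mul_left, divWeights, List.map_map]
  refine List.sum_le_sum fun p hp => ?_
  simp only [Function.comp_apply]
  rw [← Real.rpow_add two_pos]
  refine Real.rpow_le_rpow_of_exponent_le one_le_two ?_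
  have hw : 0 < √p.1 := Real.sqrt_pos.2 (hL.pos p hp)
  have hgap : D * (√b - 1) ≤ D * (√b - 1) / √p.1 :=
    le_div_self (mul_nonneg hD (sub_nonneg.2 (Real.one_le_sqrt.2 hb))) hw
      (Real.sqrt_le_one.2 (hL.le_one p hp))
  have hsplit : D / √(p.1 / b) = D / √p.1 + D * (√b - 1) / √p.1 := by
    rw [Real.sqrt_div (hL.pos p hp).le, div_div_eq_mul_div]
    ring
  linarith

end WeightedFamilies

section LayerCake

variable {F : Finset ℕ} {L : List (ℝ × Finset ℕ)} {M : c00 → ℝ} {D a t : ℝ}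

/-- The sets of a weighted family whose weight is at least `t`. -/
noncomputable def superlevel (t : ℝ) (L : List (ℝ × Finset ℕ)) : List (Finset ℕ) :=
  (L.filter fun p => t ≤ p.1).map Prod.snd

lemma blockSum_superlevel (M : c00 → ℝ) (y : c00) (t : ℝ) (L : List (ℝ × Finset ℕ)) :
    blockSum M y (superlevel t L) =
      (L.map fun p => {s | s ≤ p.1}.indicator (fun _ => M (proj p.2 y)) t).sum := by
  induction L with
  | nil => simp [blockSum, superlevel]
  | cons p L ih =>
    rw [List.map_cons, List.sum_cons, ← ih, Set.indicator_apply]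
    by_cases h : t ≤ p.1 <;> simp [superlevel, blockSum, h]

lemma intervalIntegrable_indicator_setOf_le (w c : ℝ) :
    IntervalIntegrable ({s : ℝ | s ≤ w}.indicator fun _ => c) MeasureTheory.volume 0 1 := by
  rw [intervalIntegrable_iff]
  exact (intervalIntegrable_iff.1 intervalIntegrable_const).indicator measurableSet_Iic

lemma intervalIntegrable_blockSum_superlevel (M : c00 → ℝ) (y : c00)
    (L : List (ℝ × Finset ℕ)) :
    IntervalIntegrable (fun t => blockSum M y (superlevel t L)) MeasureTheory.volume 0 1 := by
  simp only [blockSum_superlevel]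
  induction L with
  | nil => simp
  | cons p L ih =>
    simpa only [List.map_cons, List.sum_cons] using
      (intervalIntegrable_indicator_setOf_le _ _).add ih

lemma integral_blockSum_superlevel (hL : IsWeightedFamily F L) (M : c00 → ℝ) (y : c00) :
    ∫ t in (0 : ℝ)..1, blockSum M y (superlevel t L) = weightedSum M y L := by
  have hw : ∀ p ∈ L, p.1 ∈ Set.Icc (0 : ℝ) 1 := fun p hp => ⟨(hL.pos p hp).le, hL.le_one p hp⟩
  clear hL
  induction L with
  | nil => simp [weightedSum, superlevel, blockSum]
  | cons p L ih =>
    have hint := intervalIntegrable_blockSum_superlevel M y L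
    simp only [List.forall_mem_cons] at hw
    simp only [blockSum_superlevel, List.map_cons, List.sum_cons] at ih hint ⊢
    rw [intervalIntegral.integral_add (intervalIntegrable_indicator_setOf_le _ _) hint, ih hw.2,
      intervalIntegral.integral_indicator hw.1]
    simp [weightedSum]

lemma length_superlevel_le (hD : 0 ≤ D) (ht : 0 < t) (hkraft : kraftSum D L ≤ 2 ^ a) :
    ((superlevel t L).length : ℝ) ≤ 2 ^ (a + D / √t) := by
  set L' := L.filter fun p => t ≤ p.1
  have hlarge : ∀ p ∈ L', (2 : ℝ) ^ (-(D / √t)) ≤ 2 ^ (-(D / √p.1)) := fun p hp => by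
    have htp : t ≤ p.1 := by simpa using (List.mem_filter.1 hp).2
    gcongr
    exact one_le_two
  have hcard : (L'.length : ℝ) * 2 ^ (-(D / √t)) ≤ kraftSum D L' := by
    simpa [kraftSum] using List.card_nsmul_le_sum _ _ (List.forall_mem_map.2 hlarge)
  have hsub : kraftSum D L' ≤ kraftSum D L :=
    (List.filter_sublist.map _).sum_le_sum (List.forall_mem_map.2 fun p _ => by positivity)
  have h := (hcard.trans hsub).trans hkraft
  rw [Real.rpow_neg two_pos.le, mul_inv_le_iff₀ (by positivity), ← Real.rpow_add two_pos] at h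
  simpa [superlevel] using h

lemma flog_le_of_le_two_rpow {n r : ℝ} (hn : 0 ≤ n) (hr : 0 ≤ r) (h : n ≤ 2 ^ r) :
    flog n ≤ r + 1 := by
  have hone : (1 : ℝ) ≤ 2 ^ r := Real.one_le_rpow one_le_two hr
  rw [flog, Real.logb_le_iff_le_rpow one_lt_two (by linarith), Real.rpow_add_one two_ne_zero]
  linarith

lemma integral_add_div_sqrt (a D : ℝ) : ∫ t in (0 : ℝ)..1, (a + D * t ^ (-1 / 2 : ℝ)) =
    a + 2 * D := by
  rw [intervalIntegral.integral_add intervalIntegrable_const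
    ((intervalIntegral.intervalIntegrable_rpow' (by norm_num)).const_mul D),
    intervalIntegral.integral_const_mul, integral_rpow (by norm_num)]
  norm_num
  ring

lemma weightedSum_le_mul_of_kraftSum_le (hM₀ : ∀ y, 0 ≤ M y)
    (hM : LowerEstimate (fun n => flog n) 0 M) (hL : IsWeightedFamily F L) (ha : 0 ≤ a)
    (hD : 0 ≤ D) (hkraft : kraftSum D L ≤ 2 ^ a) (y : c00) :
    weightedSum M y L ≤ (a + 1 + 2 * D) * M y := by
  have hlevel : ∀ t ∈ Set.Ioo (0 : ℝ) 1,
      blockSum M y (superlevel t L) ≤ (a + 1 + D * t ^ (-1 / 2 : ℝ)) * M y := by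
    intro t ht
    refine (hM y _ (Nat.zero_le _) ?_).trans (mul_le_mul_of_nonneg_right ?_ (hM₀ y))
    · exact List.pairwise_map.2 (hL.pairwise.sublist List.filter_sublist)
    · have hrpow : D * t ^ (-1 / 2 : ℝ) = D / √t := by
        rw [Real.sqrt_eq_rpow, neg_div, Real.rpow_neg ht.1.le, ← div_eq_mul_inv]
      have hlog := flog_le_of_le_two_rpow (Nat.cast_nonneg _)
        (add_nonneg ha (div_nonneg hD (Real.sqrt_nonneg t))) (length_superlevel_le hD ht.1 hkraft)
      linarith
  have hint : IntervalIntegrable (fun t : ℝ => (a + 1 + D * t ^ (-1 / 2 : ℝ)) * M y)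
      MeasureTheory.volume 0 1 :=
    (intervalIntegrable_const.add
      ((intervalIntegral.intervalIntegrable_rpow' (by norm_num)).const_mul D)).mul_const _
  calc weightedSum M y L = ∫ t in (0 : ℝ)..1, blockSum M y (superlevel t L) :=
        (integral_blockSum_superlevel hL M y).symm
    _ ≤ ∫ t in (0 : ℝ)..1, (a + 1 + D * t ^ (-1 / 2 : ℝ)) * M y :=
        intervalIntegral.integral_mono_on_of_le_Ioo zero_le_one
          (intervalIntegrable_blockSum_superlevel M y L) hint hlevel
    _ = (a + 1 + 2 * D) * M y := by
        rw [intervalIntegral.integral_mul_const, integral_add_div_sqrt]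

end LayerCake

section Expansion

variable {φ : ℕ → ℝ} {m : ℕ} {N : c00 → ℝ} {x : c00} {F : Finset ℕ} {S : List (Finset ℕ)}
  {T : Finset ℕ → Prop} {D c : ℝ}

/-- `N(F(x))` is a weighted sum of the values at successive subsets of `F` satisfying `T`, with
weights of Kraft sum at most one. -/
def HasExpansion (T : Finset ℕ → Prop) (D : ℝ) (N : c00 → ℝ) (x : c00) (F : Finset ℕ) : Prop :=
  ∃ L, IsWeightedFamily F L ∧ (∀ p ∈ L, T p.2) ∧ N (proj F x) = weightedSum N x L ∧
    kraftSum D L ≤ 1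

lemma hasExpansion_self (hF : T F) (hD : 0 ≤ D) : HasExpansion T D N x F :=
  ⟨[(1, F)], isWeightedFamily_singleton F, by simpa using hF, by simp [weightedSum],
    kraftSum_singleton_le_one hD F⟩

lemma IsNormingSplit.exists_weightedFamily (hS : IsNormingSplit φ m N x F S)
    (h : ∀ E ∈ S, HasExpansion T D N x E) :
    ∃ L, IsWeightedFamily F L ∧ (∀ p ∈ L, p.2 ⊂ F ∧ T p.2) ∧
      N (proj F x) = (φ S.length)⁻¹ * weightedSum N x L ∧ kraftSum D L ≤ S.length := by
  choose! G hG hGT hGsum hGkraft using h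
  refine ⟨S.flatMap G, .flatMap hS.pairwise (fun E hE => (hS.ssubset E hE).subset) hG, ?_, ?_, ?_⟩
  · intro p hp
    obtain ⟨E, hE, hpE⟩ := List.mem_flatMap.1 hp
    exact ⟨((hG E hE).subset p hpE).trans_ssubset (hS.ssubset E hE), hGT E hE p hpE⟩
  · rw [hS.eq_inv_mul, weightedSum, sum_map_flatMap]
    exact congrArg _ (congrArg List.sum (List.map_congr_left hGsum))
  · have hsum := List.sum_le_card_nsmul (S.map fun E => kraftSum D (G E)) 1
      (List.forall_mem_map.2 hGkraft)
    rw [kraftSum, sum_map_flatMap]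
    simpa only [List.length_map, nsmul_one, kraftSum] using hsum

lemma natCast_le_two_rpow {n : ℕ} {r : ℝ} (h : Real.logb 2 n ≤ r) : (n : ℝ) ≤ 2 ^ r := by
  rcases n.eq_zero_or_pos with rfl | hn
  · simpa using Real.rpow_nonneg two_pos.le r
  · exact (Real.logb_le_iff_le_rpow one_lt_two (Nat.cast_pos.2 hn)).1 h

/-- Splitting `F` multiplies the Kraft sum by at most `n ≤ 2 ^ (φ n + c)`, and the new factor
`1 / φ n` in the weights gains `2 ^ (-D (√(φ n) - 1))`, which compensates by the choice of `D`. -/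
lemma hasExpansion_of_forall_split (hφ₁ : ∀ n, m ≤ n → 1 ≤ φ n)
    (hφlog : ∀ n, m ≤ n → Real.logb 2 n ≤ φ n + c) (hD : 0 ≤ D)
    (h : ∀ E, T E ∨ ∃ S, IsNormingSplit φ m N x E S ∧
      φ S.length + c ≤ D * (√(φ S.length) - 1)) (F : Finset ℕ) :
    HasExpansion T D N x F := by
  induction F using Finset.strongInduction with
  | H F ih =>
    rcases h F with hF | ⟨S, hS, hgain⟩
    · exact hasExpansion_self hF hD
    obtain ⟨L, hL, hLT, hLsum, hLkraft⟩ :=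
      hS.exists_weightedFamily fun E hE => ih E (hS.ssubset E hE)
    have hb := hφ₁ _ hS.le_length
    refine ⟨divWeights (φ S.length) L, hL.divWeights hb,
      List.forall_mem_map.2 fun p hp => (hLT p hp).2, ?_, ?_⟩
    · rw [hLsum, weightedSum_divWeights]
    · calc kraftSum D (divWeights (φ S.length) L)
          ≤ 2 ^ (-(φ S.length + c)) * kraftSum D L := kraftSum_divWeights_le hL hb hD hgain
        _ ≤ 2 ^ (-(φ S.length + c)) * 2 ^ (φ S.length + c) := by
            gcongr
            exact hLkraft.trans (natCast_le_two_rpow (hφlog _ hS.le_length))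
        _ = 1 := by rw [← Real.rpow_add two_pos, neg_add_cancel, Real.rpow_zero]

end Expansion

section Domination

variable {φ : ℕ → ℝ} {m : ℕ} {N M : c00 → ℝ} {x : c00} {F : Finset ℕ} {S : List (Finset ℕ)}
  {c δ K : ℝ}

lemma exists_forall_add_le_mul_sqrt_sub_one (hδ : 1 < δ) (hc : 0 ≤ c) :
    ∃ K, 0 ≤ K ∧ ∀ b B, δ ≤ b → b ≤ B → b + c ≤ K * √B * (√b - 1) := by
  have hs : 0 < √δ - 1 := sub_pos.2 (Real.lt_sqrt_of_sq_lt (by simpa using hδ))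
  refine ⟨(1 + c) * √δ / (√δ - 1), by positivity, fun b B hδb hbB => ?_⟩
  have hδb' : √δ ≤ √b := Real.sqrt_le_sqrt hδb
  have hbB' : √b ≤ √B := Real.sqrt_le_sqrt hbB
  have hratio : √b ≤ √δ / (√δ - 1) * (√b - 1) := by
    rw [div_mul_eq_mul_div, le_div_iff₀ hs]
    linarith
  calc b + c ≤ (1 + c) * b := by nlinarith
    _ = (1 + c) * (√b * √b) := by rw [Real.mul_self_sqrt (by linarith)]
    _ ≤ (1 + c) * (√B * (√δ / (√δ - 1) * (√b - 1))) := by gcongr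
    _ = (1 + c) * √δ / (√δ - 1) * √B * (√b - 1) := by ring

lemma sqrt_four_mul (b : ℝ) : √(4 * b) = 2 * √b := by
  rw [Real.sqrt_mul zero_le_four, show (4 : ℝ) = 2 ^ 2 by norm_num, Real.sqrt_sq two_pos.le]

lemma inv_mul_le_exp_div_sqrt {b : ℝ} (hb : 1 ≤ b) (hc : 0 ≤ c) :
    b⁻¹ * (b + c + 1 + 2 * (K * √(4 * b))) ≤ Real.exp ((c + 1 + 4 * K) / √b) := by
  have hs : 1 ≤ √b := Real.one_le_sqrt.2 hb
  have hsq : √b * √b = b := Real.mul_self_sqrt (by linarith)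
  refine le_trans ?_ (Real.add_one_le_exp _)
  have hmul : b * ((c + 1 + 4 * K) / √b + 1) = (c + 1 + 4 * K) * √b + b := by
    field_simp
    linear_combination (-(c + 1 + 4 * K)) * hsq
  rw [inv_mul_le_iff₀ (by linarith), hmul, sqrt_four_mul]
  nlinarith

/-- The leaves at which the iteration stops when it starts from a splitting of weight `b`, with
`B = 4 * b`: the value is the supremum norm, or the next splitting has weight above `B`. -/
def IsTerminal (φ : ℕ → ℝ) (m : ℕ) (N : c00 → ℝ) (x : c00) (B : ℝ) (E : Finset ℕ) : Prop :=
  N (proj E x) = supNorm (proj E x) ∨ ∃ S, IsNormingSplit φ m N x E S ∧ B < φ S.length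

lemma IsTerminal.le_exp_mul {A b : ℝ} {E : Finset ℕ} (hE : IsTerminal φ m N x (4 * b) E)
    (hb : 0 < b) (hA : 0 ≤ A) (hsup : ∀ x, supNorm x ≤ M x)
    (ih : ∀ S, IsNormingSplit φ m N x E S →
      N (proj E x) ≤ Real.exp (2 * A / √(φ S.length)) * M (proj E x)) :
    N (proj E x) ≤ Real.exp (A / √b) * M (proj E x) := by
  have hM₀ : 0 ≤ M (proj E x) := (supNorm_nonneg _).trans (hsup _)
  rcases hE with h | ⟨S, hS, hlt⟩
  · rw [h]
    exact (hsup _).trans (le_mul_of_one_le_left hM₀ (Real.one_le_exp (by positivity)))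
  · refine (ih S hS).trans (mul_le_mul_of_nonneg_right (Real.exp_le_exp.2 ?_) hM₀)
    have hsqrt : 2 * √b ≤ √(φ S.length) := sqrt_four_mul b ▸ Real.sqrt_le_sqrt hlt.le
    calc 2 * A / √(φ S.length) ≤ 2 * A / (2 * √b) := by gcongr
      _ = A / √b := mul_div_mul_left _ _ two_ne_zero

lemma tendsto_atTop_of_logb_le (h : ∀ n, m ≤ n → Real.logb 2 n ≤ φ n + c) :
    Filter.Tendsto φ Filter.atTop Filter.atTop := by
  refine Filter.tendsto_atTop_mono' _ ?_ (Filter.tendsto_atTop_add_const_right _ (-c)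
    ((Real.tendsto_logb_atTop one_lt_two).comp tendsto_natCast_atTop_atTop))
  filter_upwards [Filter.eventually_ge_atTop m] with n hn
  rw [Function.comp_apply]
  linarith [h n hn]

namespace IsImplicitSolution

lemma hasExpansion_isTerminal (hN : IsImplicitSolution φ m N)
    (hφ : Filter.Tendsto φ Filter.atTop Filter.atTop) (hδ : 1 < δ) (hφδ : ∀ n, m ≤ n → δ ≤ φ n)
    (hφlog : ∀ n, m ≤ n → Real.logb 2 n ≤ φ n + c) (hK₀ : 0 ≤ K)
    (hK : ∀ b B, δ ≤ b → b ≤ B → b + c ≤ K * √B * (√b - 1)) (B : ℝ) (F : Finset ℕ) :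
    HasExpansion (IsTerminal φ m N x B) (K * √B) N x F := by
  have hφ₁ : ∀ n, m ≤ n → 1 < φ n := fun n hn => hδ.trans_le (hφδ n hn)
  refine hasExpansion_of_forall_split (fun n hn => (hφ₁ n hn).le) hφlog (by positivity)
    (fun E => ?_) F
  rcases hN.eq_supNorm_or_exists_isNormingSplit hφ hφ₁ x E with hE | ⟨S, hS⟩
  · exact Or.inl (Or.inl hE)
  rcases lt_or_ge B (φ S.length) with hlt | hle
  · exact Or.inl (Or.inr ⟨S, hS, hlt⟩)
  · exact Or.inr ⟨S, hS, hK _ _ (hφδ _ hS.le_length) hle⟩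

lemma proj_le_exp_mul (hN : IsImplicitSolution φ m N)
    (hφ : Filter.Tendsto φ Filter.atTop Filter.atTop) (hδ : 1 < δ) (hφδ : ∀ n, m ≤ n → δ ≤ φ n)
    (hφlog : ∀ n, m ≤ n → Real.logb 2 n ≤ φ n + c) (hc : 0 ≤ c) (hK₀ : 0 ≤ K)
    (hK : ∀ b B, δ ≤ b → b ≤ B → b + c ≤ K * √B * (√b - 1)) (hsup : ∀ x, supNorm x ≤ M x)
    (hM : LowerEstimate (fun n => flog n) 0 M) (hS : IsNormingSplit φ m N x F S) :
    N (proj F x) ≤ Real.exp (2 * (c + 1 + 4 * K) / √(φ S.length)) * M (proj F x) := by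
  induction F using Finset.strongInduction generalizing S with
  | H F ih =>
    set b := φ S.length
    set A := c + 1 + 4 * K
    have hb : 1 ≤ b := hδ.le.trans (hφδ _ hS.le_length)
    have hM₀ : ∀ y, 0 ≤ M y := fun y => (supNorm_nonneg y).trans (hsup y)
    obtain ⟨L, hL, hLT, hLsum, hLkraft⟩ := hS.exists_weightedFamily fun E _ =>
      hN.hasExpansion_isTerminal hφ hδ hφδ hφlog hK₀ hK (4 * b) E
    have hleaves : weightedSum N x L ≤ Real.exp (A / √b) * weightedSum M x L :=
      weightedSum_le_mul_weightedSum hL fun p hp => (hLT p hp).2.le_exp_mul (by linarith)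
        (by positivity) hsup fun _ hS' => ih p.2 (hLT p hp).1 hS'
    have hcake : weightedSum M x L ≤ (b + c + 1 + 2 * (K * √(4 * b))) * M (proj F x) := by
      rw [← weightedSum_proj hL]
      exact weightedSum_le_mul_of_kraftSum_le hM₀ hM hL (by positivity) (by positivity)
        (hLkraft.trans (natCast_le_two_rpow (hφlog _ hS.le_length))) _
    calc N (proj F x) = b⁻¹ * weightedSum N x L := hLsum
      _ ≤ b⁻¹ * (Real.exp (A / √b) *
            ((b + c + 1 + 2 * (K * √(4 * b))) * M (proj F x))) := by
          gcongr
          exact hleaves.trans (by gcongr)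
      _ = Real.exp (A / √b) * (b⁻¹ * (b + c + 1 + 2 * (K * √(4 * b)))) * M (proj F x) := by ring
      _ ≤ Real.exp (A / √b) * Real.exp (A / √b) * M (proj F x) := by
          gcongr
          · exact hM₀ _
          · exact inv_mul_le_exp_div_sqrt hb hc
      _ = Real.exp (2 * A / √b) * M (proj F x) := by
          rw [← Real.exp_add]
          ring_nf

theorem exists_forall_le_mul (hN : IsImplicitSolution φ m N) (hδ : 1 < δ)
    (hφδ : ∀ n, m ≤ n → δ ≤ φ n) (hφlog : ∀ n, m ≤ n → Real.logb 2 n ≤ φ n + c) (hc : 0 ≤ c)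
    (hsup : ∀ x, supNorm x ≤ M x) (hM : LowerEstimate (fun n => flog n) 0 M) :
    ∃ C, 1 ≤ C ∧ ∀ x, N x ≤ C * M x := by
  have hφ := tendsto_atTop_of_logb_le hφlog
  obtain ⟨K, hK₀, hK⟩ := exists_forall_add_le_mul_sqrt_sub_one hδ hc
  have hA : 0 ≤ 2 * (c + 1 + 4 * K) := by positivity
  refine ⟨Real.exp (2 * (c + 1 + 4 * K)), Real.one_le_exp hA, fun x => ?_⟩
  have hM₀ : 0 ≤ M x := (supNorm_nonneg x).trans (hsup x)
  rcases hN.eq_supNorm_or_exists_isNormingSplit hφ (fun n hn => hδ.trans_le (hφδ n hn)) x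
    x.support with h | ⟨S, hS⟩
  · rw [proj_support] at h
    exact h.trans_le ((hsup x).trans (le_mul_of_one_le_left hM₀ (Real.one_le_exp hA)))
  · have hle := hN.proj_le_exp_mul hφ hδ hφδ hφlog hc hK₀ hK hsup hM hS
    rw [proj_support] at hle
    refine hle.trans (mul_le_mul_of_nonneg_right (Real.exp_le_exp.2 ?_) hM₀)
    exact div_le_self hA (Real.one_le_sqrt.2 (hδ.le.trans (hφδ _ hS.le_length)))

end IsImplicitSolution

end Domination

section Norms

variable {N : c00 → ℝ}

lemma exists_fin_family_iff_exists_list (φ : ℕ → ℝ) (m : ℕ) (N : c00 → ℝ) (x : c00) (s : ℝ) :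
    (∃ n, m ≤ n ∧ ∃ E : Fin n → Finset ℕ, (∀ i j : Fin n, i < j → FLt (E i) (E j)) ∧
      s = (φ n)⁻¹ * ∑ i, N (proj (E i) x)) ↔
    ∃ L : List (Finset ℕ), m ≤ L.length ∧ L.Pairwise FLt ∧
      s = (φ L.length)⁻¹ * blockSum N x L := by
  constructor
  · rintro ⟨n, hn, E, hE, rfl⟩
    refine ⟨List.ofFn E, by simpa using hn, List.pairwise_ofFn.2 hE, ?_⟩
    simp [blockSum, List.map_ofFn, List.sum_ofFn]
  · rintro ⟨L, hm, hL, rfl⟩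
    refine ⟨L.length, hm, L.get, List.pairwise_iff_get.1 hL, ?_⟩
    rw [blockSum, ← List.sum_ofFn]
    refine congrArg (fun l : List ℝ => (φ L.length)⁻¹ * l.sum) ?_
    apply List.ext_getElem <;> simp

lemma IsSchlumprechtNorm.isImplicitSolution (hN : IsSchlumprechtNorm N) :
    IsImplicitSolution (fun n => flog n) 2 N where
  map_zero := (hN.1.1 0).2 rfl
  isLUB x := by
    simpa only [schSet, exists_fin_family_iff_exists_list (fun n => flog n)] using hN.2 x

lemma IsGNorm.isImplicitSolution (hN : IsGNorm N) : IsImplicitSolution (fun n => glog n) 3 N where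
  map_zero := (hN.1.1 0).2 rfl
  isLUB x := by
    simpa only [gSet, exists_fin_family_iff_exists_list (fun n => glog n)] using hN.2 x

lemma one_lt_flog {r : ℝ} (hr : 1 < r) : 1 < flog r := by
  rw [flog, Real.lt_logb_iff_rpow_lt one_lt_two (by linarith), Real.rpow_one]
  linarith

lemma logb_le_flog {r : ℝ} (hr : 0 < r) : Real.logb 2 r ≤ flog r :=
  Real.logb_le_logb_of_le one_lt_two hr (by linarith)

lemma glog_le_glog {r s : ℝ} (hr : 0 ≤ r) (hrs : r ≤ s) : glog r ≤ glog s :=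
  Real.logb_le_logb_of_le one_lt_two (by linarith) (by linarith)

lemma one_lt_glog_three : 1 < glog 3 := by
  rw [glog, Real.lt_logb_iff_rpow_lt one_lt_two (by norm_num)]
  norm_num

lemma logb_le_glog_add_one {r : ℝ} (hr : 0 < r) : Real.logb 2 r ≤ glog r + 1 := by
  calc Real.logb 2 r ≤ Real.logb 2 ((1 + r / 2) * 2) :=
        Real.logb_le_logb_of_le one_lt_two hr (by linarith)
    _ = glog r + 1 := by
        rw [Real.logb_mul (by linarith) two_ne_zero, Real.logb_self_eq_one one_lt_two, glog]

lemma glog_add_one_le_flog {r : ℝ} (hr : 1 ≤ r) : glog (r + 1) ≤ flog r :=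
  Real.logb_le_logb_of_le one_lt_two (by linarith) (by linarith)

lemma IsSchlumprechtNorm.lowerEstimate_flog (hN : IsSchlumprechtNorm N) :
    LowerEstimate (fun n => flog n) 0 N :=
  hN.isImplicitSolution.lowerEstimate_zero
    (fun _ hn => one_pos.trans (one_lt_flog (Nat.one_lt_cast.2 hn)))
    (by simp [flog]) (by norm_num [flog])

/-- Adding `∅` to a family of `n ≥ 2` sets gives one of `n + 1 ≥ 3` sets, and
`g(n + 1) ≤ f(n)`. -/
lemma IsGNorm.lowerEstimate_flog (hN : IsGNorm N) : LowerEstimate (fun n => flog n) 2 N := by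
  intro x L hn hL
  have hsol := hN.isImplicitSolution
  have hgf : glog ↑(L.length + 1) ≤ flog L.length := by
    rw [Nat.cast_succ]
    exact glog_add_one_le_flog (mod_cast one_le_two.trans hn)
  have hempty : (∅ :: L).Pairwise FLt := List.pairwise_cons.2 ⟨by simp [FLt], hL⟩
  have hglog : ∀ n : ℕ, 3 ≤ n → 0 < glog n := fun n hn =>
    one_pos.trans (one_lt_glog_three.trans_le (glog_le_glog three_pos.le (mod_cast hn)))
  have hest := hsol.lowerEstimate hglog x (∅ :: L) (Nat.succ_le_succ hn) hempty
  rw [blockSum_cons, proj_empty, hsol.map_zero, zero_add, List.length_cons] at hest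
  exact hest.trans (mul_le_mul_of_nonneg_right hgf (hsol.nonneg x))

end Norms

/-- Lemma 3.3: the norm `⟨⟨·⟩⟩` (implicitly defined via
`g(x) = log₂(1 + x/2)` and `ℓ ≥ 3`) is equivalent to the Schlumprecht norm. -/
theorem g_norm_equivalent
    (N : c00 → ℝ) (hN : IsSchlumprechtNorm N)
    (Nb : c00 → ℝ) (hNb : IsGNorm Nb) :
    (∀ x : c00, N x ≤ Nb x) ∧ ∃ C : ℝ, 1 ≤ C ∧ ∀ x : c00, Nb x ≤ C * N x := by
  have hNbsol := hNb.isImplicitSolution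
  refine ⟨fun x => ?_, ?_⟩
  · exact hN.isImplicitSolution.le_of_lowerEstimate
      (tendsto_atTop_of_logb_le (c := 0) fun n hn => by
        simpa using logb_le_flog (Nat.cast_pos.2 (two_pos.trans_le hn)))
      (fun _ hn => one_lt_flog (Nat.one_lt_cast.2 hn)) hNbsol.supNorm_le hNb.lowerEstimate_flog x
  · exact hNbsol.exists_forall_le_mul one_lt_glog_three
      (fun n hn => glog_le_glog three_pos.le (mod_cast hn))
      (fun n hn => logb_le_glog_add_one (Nat.cast_pos.2 (three_pos.trans_le hn))) zero_le_one
      hN.isImplicitSolution.supNorm_le hN.lowerEstimate_flog
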